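/- Let μ be a (K,d)-doubling Borel measure on a metric space (M,ρ) endowed with a Christ dyadic cube system with parameter δ ∈ (0,1) and with the level-j₀ subcube families. Let s ∈ ℝ, p ∈ (0,∞) and q ∈ (0,∞]. Then there exists a constant C ≥ 1 such that for every family a = {a_t^{j,ν}}_{j∈ℤ₊, t∈I_j, 1≤ν≤N_t^j} of complex numbers: C^{−1}·‖a‖_{f^{s,1/q}_{q,q}} ≤ ‖a‖_{f^{s,1/p}_{p,q}} ≤ C·‖a‖_{f^{s,1/q}_{q,q}}, and likewise C^{−1}·‖a‖_{f̃^{s,1/q}_{q,q}} ≤ ‖a‖_{f̃^{s,1/p}_{p,q}} ≤ C·‖a‖_{f̃^{s,1/q}_{q,q}}. That is, f^{s,1/q}_{q,q} = f^{s,1/p}_{p,q} and f̃^{s,1/q}_{q,q} = f̃^{s,1/p}_{p,q} with equivalent quasi-norms. -/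

import Mathlib

open MeasureTheory Metric
open scoped ENNReal

/-- A Christ dyadic cube system on a metric measure space `(M, ρ, μ)`. -/
structure ChristSystem (M : Type*) [MetricSpace M] [MeasurableSpace M] (μ : Measure M) where
  δ : ℝ
  δ_pos : 0 < δ
  δ_lt_one : δ < 1
  cSmall : ℝ
  cBig : ℝ
  cSmall_pos : 0 < cSmall
  cSmall_lt_cBig : cSmall < cBig
  I : ℤ → Type
  countable_I : ∀ j : ℤ, Countable (I j)
  Q : (j : ℤ) → I j → Set M
  center : (j : ℤ) → I j → M
  isOpen_Q : ∀ (j : ℤ) (α : I j), IsOpen (Q j α)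
  cover : ∀ j : ℤ, μ (Set.univ \ ⋃ α : I j, Q j α) = 0
  disjoint_Q : ∀ (j : ℤ) (α β : I j), α ≠ β → Q j α ∩ Q j β = ∅
  nested : ∀ (j ℓ : ℤ), j ≤ ℓ → ∀ (α : I j) (β : I ℓ), Q ℓ β ⊆ Q j α ∨ Q ℓ β ∩ Q j α = ∅
  parent : ∀ (j : ℤ) (α : I j) (ℓ : ℤ), ℓ < j → ∃! β : I ℓ, Q j α ⊆ Q ℓ β
  diam_le : ∀ (j : ℤ) (α : I j), EMetric.diam (Q j α) ≤ ENNReal.ofReal (cBig * δ ^ j)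
  ball_subset : ∀ (j : ℤ) (α : I j), ball (center j α) (cSmall * δ ^ j) ⊆ Q j α

/-- The `ℓ^q` norm (with `q ∈ (0,∞]`, usual modification when `q = ∞`) of a
sequence of extended nonnegative reals. -/
noncomputable def seqLq (q : ℝ≥0∞) (a : ℕ → ℝ≥0∞) : ℝ≥0∞ :=
  if q = ⊤ then ⨆ j, a j else (∑' j, a j ^ q.toReal) ^ (1 / q.toReal)

/-- The `L^p` quantity `(∫_A g^p dμ)^{1/p}` (ess sup over `A` when `p = ∞`) for a
nonnegative function `g`. -/
noncomputable def lpOn {M : Type*} [MetricSpace M] [MeasurableSpace M]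
    (μ : Measure M) (p : ℝ≥0∞) (A : Set M) (g : M → ℝ≥0∞) : ℝ≥0∞ :=
  if p = ⊤ then essSup g (μ.restrict A)
  else (∫⁻ x in A, g x ^ p.toReal ∂μ) ^ (1 / p.toReal)

/-- The `ℓ^q(L^p_τ)` norm of a sequence of nonnegative functions:
`sup_{k ∈ ℤ, α ∈ I_k} μ(Q_α^k)^{-τ} ( ∑_{j = max(k,0)}^∞ ( ∫_{Q_α^k} g_j^p dμ )^{q/p} )^{1/q}`. -/
noncomputable def bNorm {M : Type*} [MetricSpace M] [MeasurableSpace M] {μ : Measure M}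
    (S : ChristSystem M μ) (p q : ℝ≥0∞) (τ : ℝ) (g : ℕ → M → ℝ≥0∞) : ℝ≥0∞ :=
  ⨆ (k : ℤ) (α : S.I k), μ (S.Q k α) ^ (-τ) *
    seqLq q (fun j => if k.toNat ≤ j then lpOn μ p (S.Q k α) (g j) else 0)

/-- The `L^p_τ(ℓ^q)` norm of a sequence of nonnegative functions:
`sup_{k ∈ ℤ, α ∈ I_k} μ(Q_α^k)^{-τ} ( ∫_{Q_α^k} ( ∑_{j = max(k,0)}^∞ g_j^q )^{p/q} dμ )^{1/p}`. -/
noncomputable def fNorm {M : Type*} [MetricSpace M] [MeasurableSpace M] {μ : Measure M}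
    (S : ChristSystem M μ) (p q : ℝ≥0∞) (τ : ℝ) (g : ℕ → M → ℝ≥0∞) : ℝ≥0∞ :=
  ⨆ (k : ℤ) (α : S.I k), μ (S.Q k α) ^ (-τ) *
    lpOn μ p (S.Q k α) (fun x => seqLq q (fun j => if k.toNat ≤ j then g j x else 0))

/-- The index type of the level-`(j+j₀)` subcubes of the cube `Q_t^j`. -/
def SubIdx {M : Type*} [MetricSpace M] [MeasurableSpace M] {μ : Measure M}
    (S : ChristSystem M μ) (j₀ : ℕ) (j : ℕ) (t : S.I j) : Type :=
  {β : S.I ((j : ℤ) + j₀) // S.Q ((j : ℤ) + j₀) β ⊆ S.Q (j : ℤ) t}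

/-- The subcube `Q_t^{j,ν}`. -/
def SubQ {M : Type*} [MetricSpace M] [MeasurableSpace M] {μ : Measure M}
    (S : ChristSystem M μ) (j₀ : ℕ) (j : ℕ) (t : S.I j) (ν : SubIdx S j₀ j t) : Set M :=
  S.Q ((j : ℤ) + j₀) ν.1

/-- The level-`j` function `x ↦ ∑_{t ∈ I_j} ∑_{ν} w_t^{j,ν} |a_t^{j,ν}| χ_{E_t^{j,ν}}(x)`
associated with a coefficient family `a`, a weight family `w` and a family of sets `E`. -/
noncomputable def seqFunOn {M : Type*} [MetricSpace M] [MeasurableSpace M] {μ : Measure M}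
    (S : ChristSystem M μ) (j₀ : ℕ)
    (w : (j : ℕ) → (t : S.I j) → SubIdx S j₀ j t → ℝ≥0∞)
    (E : (j : ℕ) → (t : S.I j) → SubIdx S j₀ j t → Set M)
    (a : (j : ℕ) → (t : S.I j) → SubIdx S j₀ j t → ℂ) (j : ℕ) (x : M) : ℝ≥0∞ :=
  ∑' (t : S.I j) (ν : SubIdx S j₀ j t),
    w j t ν * (‖a j t ν‖₊ : ℝ≥0∞) * (E j t ν).indicator (fun _ => (1 : ℝ≥0∞)) x

/-- The level-`j` function `x ↦ ∑_{t ∈ I_j} ∑_{ν} w_t^{j,ν} |a_t^{j,ν}| χ_{Q_t^{j,ν}}(x)`. -/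
noncomputable def seqFun {M : Type*} [MetricSpace M] [MeasurableSpace M] {μ : Measure M}
    (S : ChristSystem M μ) (j₀ : ℕ)
    (w : (j : ℕ) → (t : S.I j) → SubIdx S j₀ j t → ℝ≥0∞)
    (a : (j : ℕ) → (t : S.I j) → SubIdx S j₀ j t → ℂ) (j : ℕ) (x : M) : ℝ≥0∞ :=
  seqFunOn S j₀ w (fun j t ν => SubQ S j₀ j t ν) a j x

/-- The weight `δ^{-js}` used for the sequence spaces `b^{s,τ}_{p,q}` and `f^{s,τ}_{p,q}`. -/
noncomputable def deltaWeight {M : Type*} [MetricSpace M] [MeasurableSpace M] {μ : Measure M}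
    (S : ChristSystem M μ) (j₀ : ℕ) (s : ℝ) :
    (j : ℕ) → (t : S.I j) → SubIdx S j₀ j t → ℝ≥0∞ :=
  fun j _ _ => ENNReal.ofReal (S.δ ^ (-(j : ℝ) * s))

/-- The weight `μ(Q_t^{j,ν})^{-s/d}` used for the sequence spaces `b̃^{s,τ}_{p,q}`
and `f̃^{s,τ}_{p,q}`. -/
noncomputable def tildeWeight {M : Type*} [MetricSpace M] [MeasurableSpace M] {μ : Measure M}
    (S : ChristSystem M μ) (j₀ : ℕ) (d s : ℝ) :
    (j : ℕ) → (t : S.I j) → SubIdx S j₀ j t → ℝ≥0∞ :=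
  fun j t ν => μ (SubQ S j₀ j t ν) ^ (-(s / d))


section Helpers

variable {M : Type*} [MetricSpace M] [MeasurableSpace M] {μ : Measure M}

/-- Level-`j` functions constant on the level-`(j+j₀)` cubes. -/
def CubeConst (S : ChristSystem M μ) (j₀ : ℕ) (h : ℕ → M → ℝ≥0∞) : Prop :=
  ∀ j : ℕ, Measurable (h j) ∧
    ∀ (β : S.I ((j : ℤ) + j₀)) (x y : M), x ∈ S.Q _ β → y ∈ S.Q _ β → h j x = h j y

/-- Tail sums. -/
noncomputable def Tl (h : ℕ → M → ℝ≥0∞) (k : ℤ) (x : M) : ℝ≥0∞ :=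
  ∑' j, if k.toNat ≤ j then h j x else 0

/-- Partial tail sums. -/
noncomputable def Pl (h : ℕ → M → ℝ≥0∞) (k : ℤ) (n : ℕ) (x : M) : ℝ≥0∞ :=
  ∑ j ∈ Finset.range n, if k.toNat ≤ j then h j x else 0

/-- Truncation. -/
noncomputable def trunc (h : ℕ → M → ℝ≥0∞) (n : ℕ) (j : ℕ) (x : M) : ℝ≥0∞ :=
  if j < n then h j x else 0

theorem center_mem (S : ChristSystem M μ) (k : ℤ) (α : S.I k) : S.center k α ∈ S.Q k α :=
  S.ball_subset k α (mem_ball_self (mul_pos S.cSmall_pos (zpow_pos S.δ_pos k)))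

theorem Q_pos (S : ChristSystem M μ)
    (hball : ∀ (x : M) (r : ℝ), 0 < r → 0 < μ (ball x r) ∧ μ (ball x r) < ⊤)
    (k : ℤ) (α : S.I k) : 0 < μ (S.Q k α) :=
  (hball _ _ (mul_pos S.cSmall_pos (zpow_pos S.δ_pos k))).1.trans_le
    (measure_mono (S.ball_subset k α))

theorem Q_sub_ball (S : ChristSystem M μ) (k : ℤ) (α : S.I k) (x : M) (hx : x ∈ S.Q k α) :
    S.Q k α ⊆ ball x (2 * S.cBig * S.δ ^ k) := by
  intro y hy
  have hb : 0 < S.cBig := S.cSmall_pos.trans S.cSmall_lt_cBig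
  have hpos : 0 < S.cBig * S.δ ^ k := mul_pos hb (zpow_pos S.δ_pos k)
  have h1 : edist y x ≤ ENNReal.ofReal (S.cBig * S.δ ^ k) :=
    (EMetric.edist_le_diam_of_mem hy hx).trans (S.diam_le k α)
  rw [edist_dist, ENNReal.ofReal_le_ofReal_iff hpos.le] at h1
  rw [mem_ball]
  linarith

theorem Q_lt_top (S : ChristSystem M μ)
    (hball : ∀ (x : M) (r : ℝ), 0 < r → 0 < μ (ball x r) ∧ μ (ball x r) < ⊤)
    (k : ℤ) (α : S.I k) : μ (S.Q k α) < ⊤ := by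
  have hb : 0 < S.cBig := S.cSmall_pos.trans S.cSmall_lt_cBig
  exact (measure_mono (Q_sub_ball S k α _ (center_mem S k α))).trans_lt
    (hball _ _ (by have := zpow_pos S.δ_pos k; positivity)).2

theorem exists_D (K d : ℝ) (hdoub : ∀ (x : M) (r lam : ℝ), 0 < r → 1 ≤ lam →
      μ (ball x (lam * r)) ≤ ENNReal.ofReal (K * lam ^ d) * μ (ball x r))
    (S : ChristSystem M μ) (j₀ : ℕ) :
    ∃ D : ℝ≥0∞, D ≠ ⊤ ∧ ∀ (k : ℤ) (α : S.I k) (β : S.I (k + j₀)), S.Q _ β ⊆ S.Q k α →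
      μ (S.Q k α) ≤ D * μ (S.Q _ β) := by
  have hb : 0 < S.cBig := S.cSmall_pos.trans S.cSmall_lt_cBig
  have hs := S.cSmall_pos
  have hδ := S.δ_pos
  set lam : ℝ := 2 * S.cBig / S.cSmall / S.δ ^ j₀ with hlam
  refine ⟨ENNReal.ofReal (K * lam ^ d), ENNReal.ofReal_ne_top, fun k α β hsub => ?_⟩
  have hl : 1 ≤ lam := by
    rw [hlam, le_div_iff₀ (by positivity), le_div_iff₀ hs]
    have h1 : S.δ ^ j₀ ≤ 1 := pow_le_one₀ hδ.le S.δ_lt_one.le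
    have := S.cSmall_lt_cBig
    nlinarith
  have hr : lam * (S.cSmall * S.δ ^ (k + j₀ : ℤ)) = 2 * S.cBig * S.δ ^ k := by
    rw [zpow_add₀ hδ.ne', hlam, zpow_natCast]
    field_simp
  have h2 := hdoub (S.center _ β) (S.cSmall * S.δ ^ (k + j₀ : ℤ)) lam
    (mul_pos hs (zpow_pos hδ _)) hl
  rw [hr] at h2
  exact (measure_mono (Q_sub_ball S k α _ (hsub (center_mem S _ β)))).trans
    (h2.trans (mul_le_mul_right (measure_mono (S.ball_subset _ β)) _))

theorem ae_mem_all (S : ChristSystem M μ) : ∀ᵐ x ∂μ, ∀ k : ℤ, ∃ α : S.I k, x ∈ S.Q k α := by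
  rw [ae_all_iff]
  intro k
  have h := S.cover k
  rw [ae_iff]
  convert h using 2
  ext x
  simp

theorem exists_par (S : ChristSystem M μ) (k l : ℤ) (hkl : k ≤ l) (β : S.I l) :
    ∃ α : S.I k, S.Q l β ⊆ S.Q k α := by
  rcases hkl.lt_or_eq with h | h
  · exact (S.parent l β k h).exists
  · subst h
    exact ⟨β, subset_rfl⟩

theorem Q_meas [BorelSpace M] (S : ChristSystem M μ) (k : ℤ) (α : S.I k) :
    MeasurableSet (S.Q k α) := (S.isOpen_Q k α).measurableSet

theorem CubeConst.anc {S : ChristSystem M μ} {j₀ : ℕ} {h : ℕ → M → ℝ≥0∞}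
    (hc : CubeConst S j₀ h) (i : ℕ) (l : ℤ) (hl : (i : ℤ) + j₀ ≤ l) (β : S.I l) (x y : M)
    (hx : x ∈ S.Q l β) (hy : y ∈ S.Q l β) : h i x = h i y := by
  obtain ⟨α, hα⟩ := exists_par S _ l hl β
  exact (hc i).2 α x y (hα hx) (hα hy)

theorem Tl_meas {S : ChristSystem M μ} {j₀ : ℕ} {h : ℕ → M → ℝ≥0∞}
    (hc : CubeConst S j₀ h) (k : ℤ) : Measurable (Tl h k) := by
  unfold Tl
  refine Measurable.ennreal_tsum fun j => ?_
  split_ifs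
  · exact (hc j).1
  · exact measurable_const

theorem Pl_meas {S : ChristSystem M μ} {j₀ : ℕ} {h : ℕ → M → ℝ≥0∞}
    (hc : CubeConst S j₀ h) (k : ℤ) (n : ℕ) : Measurable (Pl h k n) := by
  unfold Pl
  refine Finset.measurable_sum _ fun j _ => ?_
  split_ifs
  · exact (hc j).1
  · exact measurable_const

theorem Tl_eq_iSup (h : ℕ → M → ℝ≥0∞) (k : ℤ) (x : M) : Tl h k x = ⨆ n, Pl h k n x :=
  ENNReal.tsum_eq_iSup_nat

theorem Tl_trunc (h : ℕ → M → ℝ≥0∞) (k : ℤ) (n : ℕ) (x : M) :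
    Tl (trunc h n) k x = Pl h k n x := by
  unfold Tl Pl trunc
  rw [tsum_eq_sum (s := Finset.range n)]
  · refine Finset.sum_congr rfl fun j hj => ?_
    rw [if_pos (Finset.mem_range.1 hj)]
  · intro j hj
    rw [if_neg (fun h => hj (Finset.mem_range.2 h)), ite_self]

theorem Pl_mono (h : ℕ → M → ℝ≥0∞) (k : ℤ) (x : M) : Monotone fun n => Pl h k n x := by
  intro a b hab
  exact Finset.sum_le_sum_of_subset (Finset.range_mono hab)

theorem CubeConst.trunc {S : ChristSystem M μ} {j₀ : ℕ} {h : ℕ → M → ℝ≥0∞}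
    (hc : CubeConst S j₀ h) (n : ℕ) : CubeConst S j₀ (trunc h n) := by
  intro j
  unfold _root_.trunc
  split_ifs
  · exact hc j
  · exact ⟨measurable_const, fun _ _ _ _ _ => rfl⟩

/-- Pointwise bound of the level functions. -/
theorem level_bound [BorelSpace M] {S : ChristSystem M μ} {j₀ : ℕ}
    (hball : ∀ (x : M) (r : ℝ), 0 < r → 0 < μ (ball x r) ∧ μ (ball x r) < ⊤)
    {D : ℝ≥0∞} (hD : ∀ (k : ℤ) (α : S.I k) (β : S.I (k + j₀)), S.Q _ β ⊆ S.Q k α →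
      μ (S.Q k α) ≤ D * μ (S.Q _ β))
    {h : ℕ → M → ℝ≥0∞} (hc : CubeConst S j₀ h) {s : ℝ} (hs : 0 < s) {N : ℝ≥0∞}
    (T : ℤ → M → ℝ≥0∞) (hT : ∀ (j : ℕ) x, h j x ≤ T j x)
    (hA : ∀ (k : ℤ) (α : S.I k), ∫⁻ x in S.Q k α, T k x ^ s ∂μ ≤ N ^ s * μ (S.Q k α)) :
    ∀ᵐ x ∂μ, ∀ j, h j x ≤ D ^ (1 / s) * N := by
  filter_upwards [ae_mem_all S] with x hx j
  obtain ⟨β, hβ⟩ := hx ((j : ℤ) + j₀)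
  obtain ⟨α, hα⟩ := exists_par S (j : ℤ) _ (by omega) β
  have h1 : h j x ^ s * μ (S.Q _ β) ≤ N ^ s * (D * μ (S.Q _ β)) := by
    calc h j x ^ s * μ (S.Q _ β) = ∫⁻ _ in S.Q _ β, h j x ^ s ∂μ := by
          rw [setLIntegral_const]
      _ ≤ ∫⁻ y in S.Q _ β, T j y ^ s ∂μ := by
          refine setLIntegral_mono' (Q_meas S _ β) fun y hy => ?_
          rw [(hc j).2 β x y hβ hy]
          exact ENNReal.rpow_le_rpow (hT j y) hs.le
      _ ≤ ∫⁻ y in S.Q _ α, T j y ^ s ∂μ := lintegral_mono_set hα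
      _ ≤ N ^ s * μ (S.Q _ α) := hA _ _
      _ ≤ _ := mul_le_mul_right (hD _ α β hα) _
  rw [← mul_assoc] at h1
  have h2 := (ENNReal.mul_le_mul_iff_left (Q_pos S hball _ β).ne' (Q_lt_top S hball _ β).ne).1 h1
  have h3 := ENNReal.rpow_le_rpow h2 (by positivity : 0 ≤ 1 / s)
  rw [ENNReal.mul_rpow_of_nonneg _ _ (by positivity), ← ENNReal.rpow_mul, ← ENNReal.rpow_mul,
    mul_one_div_cancel hs.ne', ENNReal.rpow_one, ENNReal.rpow_one] at h3
  rwa [mul_comm]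

end Helpers

section Core

variable {M : Type*} [MetricSpace M] [MeasurableSpace M] {μ : Measure M}

theorem add_rpow_le_two (a b : ℝ≥0∞) {r : ℝ} (hr : 0 < r) :
    (a + b) ^ r ≤ 2 ^ r * (a ^ r + b ^ r) := by
  rcases le_total a b with h | h
  · calc (a + b) ^ r ≤ (2 * b) ^ r := by
          refine ENNReal.rpow_le_rpow ?_ hr.le
          rw [two_mul]; gcongr
      _ = 2 ^ r * b ^ r := ENNReal.mul_rpow_of_nonneg _ _ hr.le
      _ ≤ _ := by gcongr; exact le_add_self
  · calc (a + b) ^ r ≤ (2 * a) ^ r := by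
          refine ENNReal.rpow_le_rpow ?_ hr.le
          rw [two_mul]; gcongr
      _ = 2 ^ r * a ^ r := ENNReal.mul_rpow_of_nonneg _ _ hr.le
      _ ≤ _ := by gcongr; exact le_self_add

theorem Tl_split (h : ℕ → M → ℝ≥0∞) (k : ℤ) (x : M) (b lam : ℝ≥0∞) (J j₀ : ℕ)
    (hb : ∀ j, h j x ≤ b) (hP : Pl h k J x ≤ lam) :
    Tl h k x ≤ lam + j₀ * b + Tl h ((J : ℤ) + j₀) x := by
  have hto : ((J : ℤ) + j₀).toNat = J + j₀ := by omega
  have e1 : ∑' j, (if j < J then (if k.toNat ≤ j then h j x else 0) else 0) = Pl h k J x := by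
    unfold Pl
    rw [tsum_eq_sum (s := Finset.range J)]
    · exact Finset.sum_congr rfl fun j hj => if_pos (Finset.mem_range.1 hj)
    · intro j hj
      exact if_neg (fun h => hj (Finset.mem_range.2 h))
  have e2 : ∑' j, (if j ∈ Finset.Ico J (J + j₀) then b else 0) = j₀ * b := by
    rw [tsum_eq_sum (s := Finset.Ico J (J + j₀))]
    · rw [Finset.sum_congr rfl fun j hj => if_pos hj]
      simp
    · intro j hj
      exact if_neg hj
  calc Tl h k x ≤ ∑' j, ((if j < J then (if k.toNat ≤ j then h j x else 0) else 0) +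
        (if j ∈ Finset.Ico J (J + j₀) then b else 0) +
        (if ((J : ℤ) + j₀).toNat ≤ j then h j x else 0)) := by
        refine ENNReal.tsum_le_tsum fun j => ?_
        rw [hto]
        by_cases h1 : j < J
        · rw [if_pos h1, add_assoc]; exact le_self_add
        · by_cases h2 : j < J + j₀
          · rw [if_neg h1, if_pos (Finset.mem_Ico.2 ⟨by omega, h2⟩), zero_add]
            refine le_trans ?_ le_self_add
            split_ifs
            · exact hb j
            · exact zero_le
          · rw [if_pos (c := J + j₀ ≤ j) (by omega)]
            refine le_trans ?_ le_add_self
            split_ifs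
            · exact le_rfl
            · exact zero_le
    _ = Pl h k J x + j₀ * b + Tl h ((J : ℤ) + j₀) x := by
        rw [ENNReal.tsum_add, ENNReal.tsum_add, e1, e2]; rfl
    _ ≤ _ := by gcongr

theorem goodlam_step [BorelSpace M] {S : ChristSystem M μ} {j₀ : ℕ}
    {h : ℕ → M → ℝ≥0∞} (hc : CubeConst S j₀ h) {b B lam : ℝ≥0∞}
    (hb : ∀ᵐ x ∂μ, ∀ j, h j x ≤ b) {r : ℝ} (hr : 0 < r)
    (hB : ∀ (k : ℤ) (α : S.I k), ∫⁻ x in S.Q k α, Tl h k x ^ r ∂μ ≤ B * μ (S.Q k α))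
    (k : ℤ) (α : S.I k) :
    ∫⁻ x in S.Q k α ∩ {x | lam < Tl h k x}, Tl h k x ^ r ∂μ ≤
      2 ^ r * ((lam + j₀ * b) ^ r + B) * μ (S.Q k α ∩ {x | lam < Tl h k x}) := by
  set X : ℝ≥0∞ := 2 ^ r * ((lam + j₀ * b) ^ r + B) with hX
  have : ∀ j, Countable (S.I j) := S.countable_I
  let F : (Σ J : ℕ, S.I ((J : ℤ) + j₀)) → Set M := fun i =>
    S.Q k α ∩ {x | Pl h k i.1 x ≤ lam ∧ lam < Pl h k (i.1 + 1) x} ∩ S.Q _ i.2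
  have hFm : ∀ i, MeasurableSet (F i) := fun i =>
    ((Q_meas S k α).inter ((measurableSet_le (Pl_meas hc k _) measurable_const).inter
      (measurableSet_lt measurable_const (Pl_meas hc k _)))).inter (Q_meas S _ _)
  have hFd : Pairwise (Function.onFun Disjoint F) := by
    rintro ⟨J, β⟩ ⟨J', β'⟩ hne
    refine Set.disjoint_left.2 ?_
    rintro x ⟨⟨-, h1, h2⟩, h3⟩ ⟨⟨-, h4, h5⟩, h6⟩
    dsimp only at h1 h2 h3 h4 h5 h6
    have hJ : J = J' := by
      by_contra hJ
      rcases lt_or_gt_of_ne hJ with hl | hl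
      · exact absurd (h2.trans_le ((Pl_mono h k x (show J + 1 ≤ J' from hl)).trans h4))
          (lt_irrefl _)
      · exact absurd (h5.trans_le ((Pl_mono h k x (show J' + 1 ≤ J from hl)).trans h1))
          (lt_irrefl _)
    subst hJ
    have hβ : β ≠ β' := fun e => hne (by rw [e])
    have := S.disjoint_Q _ β β' hβ
    exact (Set.eq_empty_iff_forall_notMem.1 this x) ⟨h3, h6⟩
  have hFi : ∀ i, ∫⁻ x in F i, Tl h k x ^ r ∂μ ≤ X * μ (F i) := by
    rintro ⟨J, β⟩
    by_cases hem : F ⟨J, β⟩ = ∅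
    · rw [hem]; simp
    obtain ⟨y, ⟨hyQ, hy1, hy2⟩, hyR⟩ := Set.nonempty_iff_ne_empty.2 hem
    dsimp only at hy1 hy2 hyR
    have hkJ : k.toNat ≤ J := by
      by_contra hlt
      have : Pl h k (J + 1) y = 0 := by
        unfold Pl
        refine Finset.sum_eq_zero fun j hj => if_neg ?_
        have := Finset.mem_range.1 hj
        omega
      rw [this] at hy2
      exact not_lt_bot hy2
    have hsub : S.Q _ β ⊆ S.Q k α := by
      rcases S.nested k ((J : ℤ) + j₀) (by omega) α β with h1 | h1
      · exact h1
      · exact absurd ⟨hyR, hyQ⟩ (Set.eq_empty_iff_forall_notMem.1 h1 y)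
    have hPc : ∀ n, n ≤ J + 1 → ∀ x ∈ S.Q _ β, Pl h k n x = Pl h k n y := by
      intro n hn x hx
      unfold Pl
      refine Finset.sum_congr rfl fun j hj => ?_
      have := Finset.mem_range.1 hj
      rw [hc.anc j ((J : ℤ) + j₀) (by omega) β x y hx hyR]
    have hFe : F ⟨J, β⟩ = S.Q _ β := by
      refine Set.Subset.antisymm Set.inter_subset_right fun x hx => ⟨⟨hsub hx, ?_, ?_⟩, hx⟩
      · dsimp only; rw [hPc J (by omega) x hx]; exact hy1
      · dsimp only; rw [hPc (J + 1) le_rfl x hx]; exact hy2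
    rw [hFe]
    calc ∫⁻ x in S.Q _ β, Tl h k x ^ r ∂μ
        ≤ ∫⁻ x in S.Q _ β, 2 ^ r * ((lam + j₀ * b) ^ r + Tl h ((J : ℤ) + j₀) x ^ r) ∂μ := by
          refine setLIntegral_mono_ae' (Q_meas S _ β) ?_
          filter_upwards [hb] with x hbx hx
          refine le_trans (ENNReal.rpow_le_rpow (Tl_split h k x b lam J j₀ hbx ?_) hr.le)
            (add_rpow_le_two _ _ hr)
          rw [hPc J (by omega) x hx]; exact hy1
      _ = 2 ^ r * ((lam + j₀ * b) ^ r * μ (S.Q _ β) +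
            ∫⁻ x in S.Q _ β, Tl h ((J : ℤ) + j₀) x ^ r ∂μ) := by
          rw [lintegral_const_mul _ (((Tl_meas hc _).pow_const r).const_add _),
            lintegral_add_left measurable_const, setLIntegral_const]
      _ ≤ 2 ^ r * ((lam + j₀ * b) ^ r * μ (S.Q _ β) + B * μ (S.Q _ β)) := by
          gcongr; exact hB _ β
      _ = X * μ (S.Q _ β) := by rw [hX]; ring
  have hsub1 : (⋃ i, F i) ⊆ S.Q k α ∩ {x | lam < Tl h k x} := by
    refine Set.iUnion_subset ?_
    rintro ⟨J, β⟩ x ⟨⟨h1, -, h2⟩, -⟩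
    refine ⟨h1, lt_of_lt_of_le h2 ?_⟩
    rw [Tl_eq_iSup]
    exact le_iSup (fun n => Pl h k n x) (J + 1)
  have hsub2 : (S.Q k α ∩ {x | lam < Tl h k x} : Set M) ≤ᵐ[μ] (⋃ i, F i) := by
    filter_upwards [ae_mem_all S] with x hx
    rintro ⟨h1, h2⟩
    rw [Set.mem_setOf_eq, Tl_eq_iSup, lt_iSup_iff] at h2
    classical
    have hpos : Nat.find h2 ≠ 0 := by
      intro h0
      have := Nat.find_spec h2
      rw [h0] at this
      simp [Pl] at this
    obtain ⟨J, hJ⟩ := Nat.exists_eq_succ_of_ne_zero hpos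
    obtain ⟨β, hβ⟩ := hx ((J : ℤ) + j₀)
    refine Set.mem_iUnion.2 ⟨⟨J, β⟩, ⟨h1, ?_, ?_⟩, hβ⟩
    · exact not_lt.1 (Nat.find_min h2 (show J < Nat.find h2 by omega))
    · have := Nat.find_spec h2
      rw [hJ] at this
      exact this
  calc ∫⁻ x in S.Q k α ∩ {x | lam < Tl h k x}, Tl h k x ^ r ∂μ
      ≤ ∫⁻ x in ⋃ i, F i, Tl h k x ^ r ∂μ := lintegral_mono_set' hsub2
    _ = ∑' i, ∫⁻ x in F i, Tl h k x ^ r ∂μ := lintegral_iUnion hFm hFd _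
    _ ≤ ∑' i, X * μ (F i) := ENNReal.tsum_le_tsum hFi
    _ = X * μ (⋃ i, F i) := by rw [ENNReal.tsum_mul_left, measure_iUnion hFd hFm]
    _ ≤ _ := by gcongr

/-- One cube estimate before absorption. -/
theorem one_step [BorelSpace M] {S : ChristSystem M μ} {j₀ : ℕ}
    {h : ℕ → M → ℝ≥0∞} (hc : CubeConst S j₀ h) {b B L N : ℝ≥0∞}
    (hN0 : N ≠ 0) (hNt : N ≠ ⊤)
    (hb : ∀ᵐ x ∂μ, ∀ j, h j x ≤ b) {r s : ℝ} (hr : 0 < r) (hs : 0 < s)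
    (hL : 2 * 2 ^ r ≤ L ^ s)
    (hA : ∀ (k : ℤ) (α : S.I k), ∫⁻ x in S.Q k α, Tl h k x ^ s ∂μ ≤ N ^ s * μ (S.Q k α))
    (hB : ∀ (k : ℤ) (α : S.I k), ∫⁻ x in S.Q k α, Tl h k x ^ r ∂μ ≤ B * μ (S.Q k α))
    (k : ℤ) (α : S.I k) :
    2 * ∫⁻ x in S.Q k α, Tl h k x ^ r ∂μ ≤
      (2 * (L * N) ^ r + (L * N + j₀ * b) ^ r + B) * μ (S.Q k α) := by
  set lam := L * N with hlam
  have hm : MeasurableSet {x | lam < Tl h k x} :=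
    measurableSet_lt measurable_const (Tl_meas hc k)
  have hNs0 : N ^ s ≠ 0 := by simp [ENNReal.rpow_eq_zero_iff, hN0, hNt]
  have hNst : N ^ s ≠ ⊤ := ENNReal.rpow_ne_top_of_nonneg hs.le hNt
  have hcheb : L ^ s * μ (S.Q k α ∩ {x | lam < Tl h k x}) ≤ μ (S.Q k α) := by
    have h1 : lam ^ s * μ (S.Q k α ∩ {x | lam < Tl h k x}) ≤ N ^ s * μ (S.Q k α) := by
      refine le_trans ?_ (hA k α)
      rw [← setLIntegral_const]
      refine le_trans (setLIntegral_mono' ((Q_meas S k α).inter hm) ?_)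
        (lintegral_mono_set Set.inter_subset_left)
      intro x hx
      exact ENNReal.rpow_le_rpow hx.2.le hs.le
    rw [hlam, ENNReal.mul_rpow_of_nonneg _ _ hs.le, mul_comm (L ^ s), mul_assoc] at h1
    exact (ENNReal.mul_le_mul_iff_right hNs0 hNst).1 h1
  have h2 : 2 * 2 ^ r * μ (S.Q k α ∩ {x | lam < Tl h k x}) ≤ μ (S.Q k α) :=
    le_trans (by gcongr) hcheb
  have h3 : ∫⁻ x in S.Q k α \ {x | lam < Tl h k x}, Tl h k x ^ r ∂μ ≤ lam ^ r * μ (S.Q k α) := by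
    calc _ ≤ ∫⁻ x in S.Q k α \ {x | lam < Tl h k x}, lam ^ r ∂μ := by
          refine setLIntegral_mono' ((Q_meas S k α).diff hm) ?_
          intro x hx
          exact ENNReal.rpow_le_rpow (not_lt.1 hx.2) hr.le
      _ = lam ^ r * μ (S.Q k α \ {x | lam < Tl h k x}) := setLIntegral_const _ _
      _ ≤ _ := by gcongr; exact Set.diff_subset
  rw [← lintegral_inter_add_sdiff _ (S.Q k α) hm]
  calc _ ≤ 2 * (2 ^ r * ((lam + j₀ * b) ^ r + B) * μ (S.Q k α ∩ {x | lam < Tl h k x}) +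
        lam ^ r * μ (S.Q k α)) := by
        gcongr
        exact goodlam_step hc hb hr hB k α
    _ = ((lam + j₀ * b) ^ r + B) * (2 * 2 ^ r * μ (S.Q k α ∩ {x | lam < Tl h k x})) +
        2 * lam ^ r * μ (S.Q k α) := by ring
    _ ≤ ((lam + j₀ * b) ^ r + B) * μ (S.Q k α) + 2 * lam ^ r * μ (S.Q k α) := by gcongr
    _ = _ := by ring

end Core

section Final

variable {M : Type*} [MetricSpace M] [MeasurableSpace M] {μ : Measure M}

theorem absorb [BorelSpace M] {S : ChristSystem M μ} {j₀ : ℕ}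
    (hball : ∀ (x : M) (r : ℝ), 0 < r → 0 < μ (ball x r) ∧ μ (ball x r) < ⊤)
    {h : ℕ → M → ℝ≥0∞} (hc : CubeConst S j₀ h) {b L N : ℝ≥0∞}
    (hN0 : N ≠ 0) (hNt : N ≠ ⊤) (hbt : b ≠ ⊤)
    (hb : ∀ᵐ x ∂μ, ∀ j, h j x ≤ b) {r s : ℝ} (hr : 0 < r) (hs : 0 < s)
    (hL : 2 * 2 ^ r ≤ L ^ s)
    (hA : ∀ (k : ℤ) (α : S.I k), ∫⁻ x in S.Q k α, Tl h k x ^ s ∂μ ≤ N ^ s * μ (S.Q k α))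
    (n : ℕ) (k : ℤ) (α : S.I k) :
    ∫⁻ x in S.Q k α, Pl h k n x ^ r ∂μ ≤
      (2 * (L * N) ^ r + (L * N + j₀ * b) ^ r) * μ (S.Q k α) := by
  set C0 := 2 * (L * N) ^ r + (L * N + j₀ * b) ^ r with hC0
  have hp : ∀ (k : ℤ) (α : S.I k), μ (S.Q k α) ≠ 0 := fun k α => (Q_pos S hball k α).ne'
  have ht : ∀ (k : ℤ) (α : S.I k), μ (S.Q k α) ≠ ⊤ := fun k α => (Q_lt_top S hball k α).ne
  have hle : ∀ k x, Pl h k n x ≤ Tl h k x := fun k x => by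
    rw [Tl_eq_iSup]; exact le_iSup (fun n => Pl h k n x) n
  set B : ℝ≥0∞ := ⨆ (k : ℤ) (α : S.I k), (∫⁻ x in S.Q k α, Pl h k n x ^ r ∂μ) / μ (S.Q k α)
    with hBdef
  have hBle : ∀ (k : ℤ) (α : S.I k),
      ∫⁻ x in S.Q k α, Pl h k n x ^ r ∂μ ≤ B * μ (S.Q k α) := fun k α => by
    rw [← ENNReal.div_le_iff (hp k α) (ht k α)]
    exact le_iSup₂ (f := fun (k : ℤ) (α : S.I k) =>
      (∫⁻ x in S.Q k α, Pl h k n x ^ r ∂μ) / μ (S.Q k α)) k α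
  have hBt : B ≠ ⊤ := by
    have : B ≤ (n * b) ^ r := by
      refine iSup₂_le fun k α => ?_
      rw [ENNReal.div_le_iff (hp k α) (ht k α), ← setLIntegral_const]
      refine setLIntegral_mono_ae' (Q_meas S k α) ?_
      filter_upwards [hb] with x hx _
      refine ENNReal.rpow_le_rpow ?_ hr.le
      calc Pl h k n x ≤ ∑ j ∈ Finset.range n, b := by
            refine Finset.sum_le_sum fun j _ => ?_
            split_ifs
            · exact hx j
            · exact zero_le
        _ = n * b := by simp
    exact ne_top_of_le_ne_top (ENNReal.rpow_ne_top_of_nonneg hr.le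
      (ENNReal.mul_ne_top (ENNReal.natCast_ne_top n) hbt)) this
  have h2 : 2 * B ≤ C0 + B := by
    rw [hBdef, ENNReal.mul_iSup]
    refine iSup_le fun k => ?_
    rw [ENNReal.mul_iSup]
    refine iSup_le fun α => ?_
    rw [← mul_div_assoc, ENNReal.div_le_iff (hp k α) (ht k α), ← hBdef]
    have := one_step (b := b) (B := B) (L := L) (hc.trunc n) hN0 hNt ?_ hr hs hL ?_ ?_ k α
    · simp only [Tl_trunc] at this
      exact this
    · filter_upwards [hb] with x hx j
      unfold trunc
      split_ifs
      · exact hx j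
      · exact zero_le
    · intro k α
      refine le_trans (lintegral_mono fun x => ?_) (hA k α)
      rw [Tl_trunc]
      exact ENNReal.rpow_le_rpow (hle k x) hs.le
    · intro k α
      simp only [Tl_trunc]
      exact hBle k α
  have h3 : B ≤ C0 := by
    rw [two_mul] at h2
    exact (ENNReal.add_le_add_iff_right hBt).1 h2
  exact (hBle k α).trans (by gcongr)

theorem rpow_iSup_nat (f : ℕ → ℝ≥0∞) {r : ℝ} (hr : 0 < r) : (⨆ n, f n) ^ r = ⨆ n, f n ^ r :=
  (ENNReal.orderIsoRpow r hr).map_iSup f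

theorem main_bound [BorelSpace M] {S : ChristSystem M μ} {j₀ : ℕ}
    (hball : ∀ (x : M) (r : ℝ), 0 < r → 0 < μ (ball x r) ∧ μ (ball x r) < ⊤)
    {D : ℝ≥0∞} (hDt : D ≠ ⊤)
    (hD : ∀ (k : ℤ) (α : S.I k) (β : S.I (k + j₀)), S.Q _ β ⊆ S.Q k α →
      μ (S.Q k α) ≤ D * μ (S.Q _ β))
    {r s : ℝ} (hr : 0 < r) (hs : 0 < s) :
    ∃ C : ℝ≥0∞, C ≠ ⊤ ∧ ∀ (h : ℕ → M → ℝ≥0∞), CubeConst S j₀ h → ∀ N : ℝ≥0∞, N ≠ 0 → N ≠ ⊤ →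
      (∀ (k : ℤ) (α : S.I k), ∫⁻ x in S.Q k α, Tl h k x ^ s ∂μ ≤ N ^ s * μ (S.Q k α)) →
      ∀ (k : ℤ) (α : S.I k), ∫⁻ x in S.Q k α, Tl h k x ^ r ∂μ ≤ (C * N) ^ r * μ (S.Q k α) := by
  have h2t : (2 * 2 ^ r : ℝ≥0∞) ≠ ⊤ :=
    ENNReal.mul_ne_top (by simp) (ENNReal.rpow_ne_top_of_nonneg hr.le (by simp))
  set L : ℝ≥0∞ := (2 * 2 ^ r) ^ (1 / s) with hLdef
  have hL : L ^ s = 2 * 2 ^ r := by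
    rw [hLdef, ← ENNReal.rpow_mul, one_div_mul_cancel hs.ne', ENNReal.rpow_one]
  have hLt : L ≠ ⊤ := ENNReal.rpow_ne_top_of_nonneg (by positivity) h2t
  set E : ℝ≥0∞ := D ^ (1 / s) with hE
  have hEt : E ≠ ⊤ := ENNReal.rpow_ne_top_of_nonneg (by positivity) hDt
  set C1 : ℝ≥0∞ := 2 * L ^ r + (L + j₀ * E) ^ r with hC1
  have hC1t : C1 ≠ ⊤ := by
    refine ENNReal.add_ne_top.2 ⟨ENNReal.mul_ne_top (by simp)
      (ENNReal.rpow_ne_top_of_nonneg hr.le hLt), ENNReal.rpow_ne_top_of_nonneg hr.le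
      (ENNReal.add_ne_top.2 ⟨hLt, ENNReal.mul_ne_top (ENNReal.natCast_ne_top _) hEt⟩)⟩
  refine ⟨C1 ^ (1 / r), ENNReal.rpow_ne_top_of_nonneg (by positivity) hC1t, ?_⟩
  intro h hc N hN0 hNt hA k α
  have hself : ∀ (j : ℕ) x, h j x ≤ Tl h j x := fun j x => by
    refine le_trans ?_ (ENNReal.le_tsum j)
    simp
  have hb := level_bound hball hD hc hs (Tl h) hself hA
  have key := absorb hball hc hN0 hNt (ENNReal.mul_ne_top hEt hNt) hb hr hs hL.ge hA
  have hconst : 2 * (L * N) ^ r + (L * N + j₀ * (E * N)) ^ r = (C1 ^ (1 / r) * N) ^ r := by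
    have e : L * N + j₀ * (E * N) = (L + j₀ * E) * N := by ring
    rw [e, ENNReal.mul_rpow_of_nonneg _ _ hr.le, ENNReal.mul_rpow_of_nonneg _ _ hr.le,
      ENNReal.mul_rpow_of_nonneg _ _ hr.le,
      ← ENNReal.rpow_mul C1, one_div_mul_cancel hr.ne', ENNReal.rpow_one, hC1]
    ring
  simp only [Tl_eq_iSup, rpow_iSup_nat _ hr]
  rw [lintegral_iSup (fun n => (Pl_meas hc k n).pow_const r)
    (fun a b hab x => ENNReal.rpow_le_rpow (Pl_mono h k x hab) hr.le)]
  refine iSup_le fun n => ?_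
  rw [← hconst]
  exact key n k α

theorem fNorm_le_iff {S : ChristSystem M μ}
    (hball : ∀ (x : M) (r : ℝ), 0 < r → 0 < μ (ball x r) ∧ μ (ball x r) < ⊤)
    {P q : ℝ≥0∞} (hP0 : P ≠ 0) (hPt : P ≠ ⊤) (hq0 : q ≠ 0) (hqt : q ≠ ⊤)
    (g : ℕ → M → ℝ≥0∞) (N : ℝ≥0∞) :
    fNorm S P q (P⁻¹).toReal g ≤ N ↔ ∀ (k : ℤ) (α : S.I k),
      ∫⁻ x in S.Q k α, Tl (fun j x => g j x ^ q.toReal) k x ^ (P.toReal / q.toReal) ∂μ ≤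
        (N ^ q.toReal) ^ (P.toReal / q.toReal) * μ (S.Q k α) := by
  have hP : 0 < P.toReal := ENNReal.toReal_pos hP0 hPt
  have hq : 0 < q.toReal := ENNReal.toReal_pos hq0 hqt
  unfold fNorm
  rw [iSup₂_le_iff]
  refine forall₂_congr fun k α => ?_
  have hm0 := (Q_pos S hball k α).ne'
  have hmt := (Q_lt_top S hball k α).ne
  have e1 : lpOn μ P (S.Q k α)
      (fun x => seqLq q (fun j => if k.toNat ≤ j then g j x else 0)) =
      (∫⁻ x in S.Q k α, Tl (fun j x => g j x ^ q.toReal) k x ^ (P.toReal / q.toReal) ∂μ) ^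
        (1 / P.toReal) := by
    unfold lpOn seqLq Tl
    rw [if_neg hPt]
    simp only [if_neg hqt]
    congr 1
    refine lintegral_congr fun x => ?_
    rw [← ENNReal.rpow_mul, one_div_mul_eq_div]
    congr 1
    refine tsum_congr fun j => ?_
    split_ifs
    · rfl
    · exact ENNReal.zero_rpow_of_pos hq
  rw [e1, ENNReal.toReal_inv, ← ENNReal.rpow_mul, mul_div_cancel₀ _ hq.ne', ENNReal.rpow_neg,
    mul_comm, ← div_eq_mul_inv, ENNReal.div_le_iff (by simp [hm0, hmt]) (by simp [hm0, hmt]),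
    ← ENNReal.rpow_le_rpow_iff hP, ENNReal.mul_rpow_of_nonneg _ _ hP.le, ← ENNReal.rpow_mul,
    ← ENNReal.rpow_mul, one_div_mul_cancel hP.ne', inv_mul_cancel₀ hP.ne', ENNReal.rpow_one,
    ENNReal.rpow_one]

theorem CubeConst.rpow {S : ChristSystem M μ} {j₀ : ℕ} {h : ℕ → M → ℝ≥0∞}
    (hc : CubeConst S j₀ h) (r : ℝ) : CubeConst S j₀ (fun j x => h j x ^ r) := fun j =>
  ⟨(hc j).1.pow_const r, fun β x y hx hy => by simp only [(hc j).2 β x y hx hy]⟩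

theorem comp_fin [BorelSpace M] {S : ChristSystem M μ} {j₀ : ℕ}
    (hball : ∀ (x : M) (r : ℝ), 0 < r → 0 < μ (ball x r) ∧ μ (ball x r) < ⊤)
    {D : ℝ≥0∞} (hDt : D ≠ ⊤)
    (hD : ∀ (k : ℤ) (α : S.I k) (β : S.I (k + j₀)), S.Q _ β ⊆ S.Q k α →
      μ (S.Q k α) ≤ D * μ (S.Q _ β))
    {P P' q : ℝ≥0∞} (hP0 : P ≠ 0) (hPt : P ≠ ⊤) (hP0' : P' ≠ 0) (hPt' : P' ≠ ⊤)
    (hq0 : q ≠ 0) (hqt : q ≠ ⊤) :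
    ∃ C : ℝ≥0∞, C ≠ ⊤ ∧ ∀ g : ℕ → M → ℝ≥0∞, CubeConst S j₀ g →
      fNorm S P q (P⁻¹).toReal g ≤ C * fNorm S P' q (P'⁻¹).toReal g := by
  have hP : 0 < P.toReal := ENNReal.toReal_pos hP0 hPt
  have hP' : 0 < P'.toReal := ENNReal.toReal_pos hP0' hPt'
  have hq : 0 < q.toReal := ENNReal.toReal_pos hq0 hqt
  obtain ⟨C, hCt, hC⟩ := main_bound (S := S) (j₀ := j₀) hball hDt hD (div_pos hP hq) (div_pos hP' hq)
  set C' : ℝ≥0∞ := max 1 (C ^ (1 / q.toReal)) with hC'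
  have hC't : C' ≠ ⊤ := by
    rw [hC']
    exact (max_lt (by simp) (ENNReal.rpow_ne_top_of_nonneg (by positivity) hCt).lt_top).ne
  have hC'0 : C' ≠ 0 := (lt_of_lt_of_le one_pos (le_max_left _ _)).ne'
  refine ⟨C', hC't, fun g hg => ?_⟩
  rw [mul_comm, ← ENNReal.div_le_iff hC'0 hC't]
  refine le_of_forall_gt_imp_ge_of_dense fun N hN => ?_
  by_cases hNt : N = ⊤
  · rw [hNt]; exact le_top
  have hN0 : N ≠ 0 := (lt_of_le_of_lt zero_le hN).ne'
  rw [ENNReal.div_le_iff hC'0 hC't, fNorm_le_iff hball hP0 hPt hq0 hqt]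
  have h1 := (fNorm_le_iff hball hP0' hPt' hq0 hqt g N).1 hN.le
  intro k α
  refine (hC _ (hg.rpow _) (N ^ q.toReal) (by simp [hN0, hNt])
    (ENNReal.rpow_ne_top_of_nonneg hq.le hNt) h1 k α).trans ?_
  gcongr
  rw [ENNReal.mul_rpow_of_nonneg _ _ hq.le, mul_comm]
  gcongr
  calc C = (C ^ (1 / q.toReal)) ^ q.toReal := by
        rw [← ENNReal.rpow_mul, one_div_mul_cancel hq.ne', ENNReal.rpow_one]
    _ ≤ _ := ENNReal.rpow_le_rpow (le_max_right _ _) hq.le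

theorem top_le [BorelSpace M] {S : ChristSystem M μ} {j₀ : ℕ}
    (hball : ∀ (x : M) (r : ℝ), 0 < r → 0 < μ (ball x r) ∧ μ (ball x r) < ⊤)
    {D : ℝ≥0∞}
    (hD : ∀ (k : ℤ) (α : S.I k) (β : S.I (k + j₀)), S.Q _ β ⊆ S.Q k α →
      μ (S.Q k α) ≤ D * μ (S.Q _ β))
    {P : ℝ≥0∞} (hP0 : P ≠ 0) (hPt : P ≠ ⊤) (g : ℕ → M → ℝ≥0∞) (hg : CubeConst S j₀ g) :
    fNorm S ⊤ ⊤ ((⊤ : ℝ≥0∞)⁻¹).toReal g ≤ D ^ (1 / P.toReal) * fNorm S P ⊤ (P⁻¹).toReal g := by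
  have hP : 0 < P.toReal := ENNReal.toReal_pos hP0 hPt
  set N := fNorm S P ⊤ (P⁻¹).toReal g with hN
  have hA : ∀ (k : ℤ) (α : S.I k), ∫⁻ x in S.Q k α,
      (⨆ j, if k.toNat ≤ j then g j x else 0) ^ P.toReal ∂μ ≤ N ^ P.toReal * μ (S.Q k α) := by
    intro k α
    have hm0 := (Q_pos S hball k α).ne'
    have hmt := (Q_lt_top S hball k α).ne
    have h1 : _ ≤ N := le_iSup₂ (f := fun (k : ℤ) (α : S.I k) => μ (S.Q k α) ^ (-(P⁻¹).toReal) *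
      lpOn μ P (S.Q k α) (fun x => seqLq ⊤ (fun j => if k.toNat ≤ j then g j x else 0))) k α
    simp only [lpOn, seqLq, if_neg hPt, if_true] at h1
    rwa [ENNReal.toReal_inv, ENNReal.rpow_neg,
      mul_comm, ← div_eq_mul_inv, ENNReal.div_le_iff (by simp [hm0, hmt]) (by simp [hm0, hmt]),
      ← ENNReal.rpow_le_rpow_iff hP, ENNReal.mul_rpow_of_nonneg _ _ hP.le, ← ENNReal.rpow_mul,
      ← ENNReal.rpow_mul, one_div_mul_cancel hP.ne', inv_mul_cancel₀ hP.ne', ENNReal.rpow_one,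
      ENNReal.rpow_one] at h1
  have hb := level_bound hball hD hg hP
    (fun (k : ℤ) x => ⨆ j, if k.toNat ≤ j then g j x else 0)
    (fun j x => le_trans (by simp) (le_iSup _ j)) hA
  refine iSup₂_le fun k α => ?_
  simp only [lpOn, seqLq, if_true, ENNReal.inv_top, ENNReal.toReal_zero, neg_zero,
    ENNReal.rpow_zero, one_mul]
  refine essSup_le_of_ae_le _ ?_
  filter_upwards [ae_restrict_of_ae hb] with x hx
  refine iSup_le fun j => ?_
  split_ifs
  · exact hx j
  · exact zero_le

theorem le_topNorm {S : ChristSystem M μ}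
    (hball : ∀ (x : M) (r : ℝ), 0 < r → 0 < μ (ball x r) ∧ μ (ball x r) < ⊤)
    {P : ℝ≥0∞} (hP0 : P ≠ 0) (hPt : P ≠ ⊤) (g : ℕ → M → ℝ≥0∞) :
    fNorm S P ⊤ (P⁻¹).toReal g ≤ fNorm S ⊤ ⊤ ((⊤ : ℝ≥0∞)⁻¹).toReal g := by
  have hP : 0 < P.toReal := ENNReal.toReal_pos hP0 hPt
  set N := fNorm S ⊤ ⊤ ((⊤ : ℝ≥0∞)⁻¹).toReal g with hN
  refine iSup₂_le fun k α => ?_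
  have hm0 := (Q_pos S hball k α).ne'
  have hmt := (Q_lt_top S hball k α).ne
  have h1 : _ ≤ N := le_iSup₂ (f := fun (k : ℤ) (α : S.I k) =>
    μ (S.Q k α) ^ (-((⊤ : ℝ≥0∞)⁻¹).toReal) *
    lpOn μ ⊤ (S.Q k α) (fun x => seqLq ⊤ (fun j => if k.toNat ≤ j then g j x else 0))) k α
  simp only [lpOn, seqLq, if_true, ENNReal.inv_top, ENNReal.toReal_zero, neg_zero,
    ENNReal.rpow_zero, one_mul] at h1
  simp only [lpOn, seqLq, if_neg hPt, if_true]
  rw [ENNReal.toReal_inv, ENNReal.rpow_neg,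
      mul_comm, ← div_eq_mul_inv, ENNReal.div_le_iff (by simp [hm0, hmt]) (by simp [hm0, hmt]),
      ← ENNReal.rpow_le_rpow_iff hP, ENNReal.mul_rpow_of_nonneg _ _ hP.le, ← ENNReal.rpow_mul,
      ← ENNReal.rpow_mul, one_div_mul_cancel hP.ne', inv_mul_cancel₀ hP.ne', ENNReal.rpow_one,
      ENNReal.rpow_one, ← setLIntegral_const]
  refine lintegral_mono_ae ?_
  filter_upwards [ENNReal.ae_le_essSup (μ := μ.restrict (S.Q k α))
    (fun x => ⨆ j, if k.toNat ≤ j then g j x else 0)] with x hx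
  exact ENNReal.rpow_le_rpow (hx.trans h1) hP.le

theorem comp_all [BorelSpace M] {S : ChristSystem M μ} {j₀ : ℕ}
    (hball : ∀ (x : M) (r : ℝ), 0 < r → 0 < μ (ball x r) ∧ μ (ball x r) < ⊤)
    {D : ℝ≥0∞} (hDt : D ≠ ⊤)
    (hD : ∀ (k : ℤ) (α : S.I k) (β : S.I (k + j₀)), S.Q _ β ⊆ S.Q k α →
      μ (S.Q k α) ≤ D * μ (S.Q _ β))
    {p q : ℝ≥0∞} (hp0 : p ≠ 0) (hpt : p ≠ ⊤) (hq0 : q ≠ 0) :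
    ∃ C : ℝ, 1 ≤ C ∧ ∀ g : ℕ → M → ℝ≥0∞, CubeConst S j₀ g →
      fNorm S q q (q⁻¹).toReal g ≤ ENNReal.ofReal C * fNorm S p q (p⁻¹).toReal g ∧
      fNorm S p q (p⁻¹).toReal g ≤ ENNReal.ofReal C * fNorm S q q (q⁻¹).toReal g := by
  suffices H : ∃ C C' : ℝ≥0∞, C ≠ ⊤ ∧ C' ≠ ⊤ ∧ ∀ g : ℕ → M → ℝ≥0∞, CubeConst S j₀ g →
      fNorm S q q (q⁻¹).toReal g ≤ C * fNorm S p q (p⁻¹).toReal g ∧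
      fNorm S p q (p⁻¹).toReal g ≤ C' * fNorm S q q (q⁻¹).toReal g by
    obtain ⟨C, C', hC, hC', H⟩ := H
    refine ⟨max 1 (max C.toReal C'.toReal), le_max_left _ _, fun g hg => ⟨?_, ?_⟩⟩
    · refine (H g hg).1.trans ?_
      gcongr
      rw [← ENNReal.ofReal_toReal hC]
      exact ENNReal.ofReal_le_ofReal (by simp)
    · refine (H g hg).2.trans ?_
      gcongr
      rw [← ENNReal.ofReal_toReal hC']
      exact ENNReal.ofReal_le_ofReal (by simp)
  by_cases hqt : q = ⊤
  · subst hqt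
    refine ⟨D ^ (1 / p.toReal), 1, ENNReal.rpow_ne_top_of_nonneg (by positivity) hDt, by simp,
      fun g hg => ⟨top_le hball hD hp0 hpt g hg, ?_⟩⟩
    rw [one_mul]
    exact le_topNorm hball hp0 hpt g
  · obtain ⟨C, hC, h1⟩ := comp_fin (S := S) (j₀ := j₀) hball hDt hD hq0 hqt hp0 hpt hq0 hqt
    obtain ⟨C', hC', h2⟩ := comp_fin (S := S) (j₀ := j₀) hball hDt hD hp0 hpt hq0 hqt hq0 hqt
    exact ⟨C, C', hC, hC', fun g hg => ⟨h1 g hg, h2 g hg⟩⟩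

theorem seqFun_cubeConst [BorelSpace M] (S : ChristSystem M μ) (j₀ : ℕ)
    (w : (j : ℕ) → (t : S.I j) → SubIdx S j₀ j t → ℝ≥0∞)
    (a : (j : ℕ) → (t : S.I j) → SubIdx S j₀ j t → ℂ) : CubeConst S j₀ (seqFun S j₀ w a) := by
  have hI : ∀ j, Countable (S.I j) := S.countable_I
  intro j
  refine ⟨?_, fun β x y hx hy => ?_⟩
  · unfold seqFun seqFunOn
    refine Measurable.ennreal_tsum fun t => ?_
    have : Countable (SubIdx S j₀ j t) := by unfold SubIdx; infer_instance
    refine Measurable.ennreal_tsum fun ν => ?_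
    exact (measurable_const.indicator (Q_meas S _ _)).const_mul _
  · unfold seqFun seqFunOn
    refine tsum_congr fun t => tsum_congr fun ν => ?_
    congr 1
    have key : ∀ z ∈ S.Q _ β, (z ∈ SubQ S j₀ j t ν ↔ β = ν.1) := by
      intro z hz
      constructor
      · intro hz'
        by_contra hne
        exact Set.eq_empty_iff_forall_notMem.1 (S.disjoint_Q _ _ _ hne) z ⟨hz, hz'⟩
      · intro e
        unfold SubQ
        rw [← e]
        exact hz
    classical
    rw [Set.indicator_apply, Set.indicator_apply]
    simp only [key x hx, key y hy]

end Final

theorem stmt_18 {M : Type*} [MetricSpace M] [MeasurableSpace M] [BorelSpace M]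
    (μ : Measure M)
    (hball : ∀ (x : M) (r : ℝ), 0 < r → 0 < μ (ball x r) ∧ μ (ball x r) < ⊤)
    (K d : ℝ) (hK : 1 < K) (hd : d = Real.logb 2 K)
    (hdoub : ∀ (x : M) (r lam : ℝ), 0 < r → 1 ≤ lam →
      μ (ball x (lam * r)) ≤ ENNReal.ofReal (K * lam ^ d) * μ (ball x r))
    (S : ChristSystem M μ) (j₀ : ℕ)
    (hfin : ∀ (j : ℕ) (t : S.I j), Finite (SubIdx S j₀ j t))
    (s : ℝ) (p q : ℝ≥0∞) (hp0 : 0 < p) (hpt : p ≠ ⊤) (hq : 0 < q) :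
    ∃ C : ℝ, 1 ≤ C ∧
      ∀ a : (j : ℕ) → (t : S.I j) → SubIdx S j₀ j t → ℂ,
        (fNorm S q q (q⁻¹).toReal (seqFun S j₀ (deltaWeight S j₀ s) a) ≤
            ENNReal.ofReal C * fNorm S p q (p⁻¹).toReal (seqFun S j₀ (deltaWeight S j₀ s) a)) ∧
        (fNorm S p q (p⁻¹).toReal (seqFun S j₀ (deltaWeight S j₀ s) a) ≤
            ENNReal.ofReal C * fNorm S q q (q⁻¹).toReal (seqFun S j₀ (deltaWeight S j₀ s) a)) ∧
        (fNorm S q q (q⁻¹).toReal (seqFun S j₀ (tildeWeight S j₀ d s) a) ≤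
            ENNReal.ofReal C * fNorm S p q (p⁻¹).toReal (seqFun S j₀ (tildeWeight S j₀ d s) a)) ∧
        (fNorm S p q (p⁻¹).toReal (seqFun S j₀ (tildeWeight S j₀ d s) a) ≤
            ENNReal.ofReal C * fNorm S q q (q⁻¹).toReal (seqFun S j₀ (tildeWeight S j₀ d s) a)) := by

  obtain ⟨D, hDt, hD⟩ := exists_D K d hdoub S j₀
  obtain ⟨C, hC1, hC⟩ := comp_all (S := S) (j₀ := j₀) hball hDt hD hp0.ne' hpt hq.ne'
  refine ⟨C, hC1, fun a => ?_⟩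
  have h1 := hC _ (seqFun_cubeConst S j₀ (deltaWeight S j₀ s) a)
  have h2 := hC _ (seqFun_cubeConst S j₀ (tildeWeight S j₀ d s) a)
  exact ⟨h1.1, h1.2, h2.1, h2.2⟩
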